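/- The reflexive Banach space ℓ₂ ⊕_∞ ℝ (which is isomorphic to ℓ₂) fails the weak maximizing property: there exists a bounded linear operator S : ℓ₂ ⊕_∞ ℝ → ℓ₂ ⊕_∞ ℝ which admits a maximizing sequence that does not converge weakly to 0, yet S does not attain its norm. -/

import Mathlib

/-!
The operator is `S (x, a) = (D x, 0)`, where `D` is the diagonal operator on `ℓ₂` with entries
`n / (n + 1)`. These entries increase to `1` without reaching it, so `‖D x‖ < ‖x‖` for `x ≠ 0`
while `‖D eₙ‖ → 1`; hence `‖S‖ = 1` is not attained. Since the norm of the sum is the maximum, the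
vectors `(eₙ, 1)` are still unit vectors. They form a maximizing sequence on which the coordinate
functional `(x, a) ↦ a` is constantly `1`, so the sequence is not weakly null.
-/

open Filter Topology

/-- `x` is a maximizing sequence for the bounded operator `T`: a sequence of unit
vectors with `‖T (x n)‖ → ‖T‖`. -/
def MaximizingSeq {E F : Type*} [NormedAddCommGroup E] [NormedSpace ℝ E]
    [NormedAddCommGroup F] [NormedSpace ℝ F] (T : E →L[ℝ] F) (x : ℕ → E) : Prop :=
  (∀ n, ‖x n‖ = 1) ∧ Tendsto (fun n => ‖T (x n)‖) atTop (𝓝 ‖T‖)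

/-- `x` converges to `0` in the weak topology of `E`. -/
def WeaklyNull {E : Type*} [NormedAddCommGroup E] [NormedSpace ℝ E] (x : ℕ → E) : Prop :=
  ∀ f : E →L[ℝ] ℝ, Tendsto (fun n => f (x n)) atTop (𝓝 0)

/-- `T` attains its norm. -/
def AttainsNorm {E F : Type*} [NormedAddCommGroup E] [NormedSpace ℝ E]
    [NormedAddCommGroup F] [NormedSpace ℝ F] (T : E →L[ℝ] F) : Prop :=
  ∃ x : E, ‖x‖ = 1 ∧ ‖T x‖ = ‖T‖

/-- The pair `(E, F)` has the weak maximizing property: every bounded linear operator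
`T : E → F` admitting a maximizing sequence that does not converge weakly to `0`
attains its norm. -/
def WMP (E F : Type*) [NormedAddCommGroup E] [NormedSpace ℝ E]
    [NormedAddCommGroup F] [NormedSpace ℝ F] : Prop :=
  ∀ T : E →L[ℝ] F, (∃ x : ℕ → E, MaximizingSeq T x ∧ ¬ WeaklyNull x) → AttainsNorm T

/-- The real Hilbert space `ℓ₂` of square-summable real sequences. -/
noncomputable abbrev ellTwo : Type := lp (fun _ : ℕ => ℝ) 2

/-- The diagonal entries `n / (n + 1)`. -/
noncomputable def diagEntry (n : ℕ) : ℝ := (n : ℝ) / ((n : ℝ) + 1)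

lemma diagEntry_nonneg (n : ℕ) : 0 ≤ diagEntry n := by
  unfold diagEntry; positivity

lemma diagEntry_lt_one (n : ℕ) : diagEntry n < 1 := by
  unfold diagEntry
  rw [div_lt_one (by positivity)]
  linarith

lemma sq_diagEntry_mul_le (n : ℕ) (t : ℝ) : (diagEntry n * t) ^ 2 ≤ t ^ 2 := by
  rw [mul_pow]
  exact mul_le_of_le_one_left (sq_nonneg t)
    (pow_le_one₀ (diagEntry_nonneg n) (diagEntry_lt_one n).le)

lemma ellTwo_summable_sq (x : ellTwo) : Summable fun n => x n ^ 2 := by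
  simpa using (lp.memℓp x).summable (by norm_num)

lemma ellTwo_norm_sq (x : ellTwo) : ‖x‖ ^ 2 = ∑' n, x n ^ 2 := by
  simpa using lp.norm_rpow_eq_tsum (p := 2) (by norm_num) x

lemma memℓp_diag (x : ellTwo) : Memℓp (fun n => diagEntry n * x n) 2 := by
  refine memℓp_gen ?_
  refine ((ellTwo_summable_sq x).of_nonneg_of_le (fun n => sq_nonneg _)
    fun n => sq_diagEntry_mul_le n (x n)).congr fun n => ?_
  simp [mul_pow]

/-- The diagonal operator on `ℓ₂` with entries `diagEntry n`, as a linear map. -/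
noncomputable def diagLin : ellTwo →ₗ[ℝ] ellTwo where
  toFun x := ⟨fun n => diagEntry n * x n, memℓp_diag x⟩
  map_add' x y := by
    ext n
    exact mul_add _ _ _
  map_smul' c x := by
    ext n
    exact mul_left_comm _ _ _

lemma diagLin_apply (x : ellTwo) (n : ℕ) : diagLin x n = diagEntry n * x n := rfl

lemma norm_diagLin_le (x : ellTwo) : ‖diagLin x‖ ≤ ‖x‖ := by
  refine le_of_sq_le_sq ?_ (norm_nonneg x)
  rw [ellTwo_norm_sq, ellTwo_norm_sq]
  exact (ellTwo_summable_sq _).tsum_le_tsum (fun n => sq_diagEntry_mul_le n (x n))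
    (ellTwo_summable_sq x)

lemma norm_diagLin_lt {x : ellTwo} (hx : x ≠ 0) : ‖diagLin x‖ < ‖x‖ := by
  obtain ⟨k, hk⟩ : ∃ k, x k ≠ 0 := by
    by_contra! h
    exact hx (lp.ext (funext h))
  refine lt_of_pow_lt_pow_left₀ 2 (norm_nonneg x) ?_
  rw [ellTwo_norm_sq, ellTwo_norm_sq]
  refine Summable.tsum_lt_tsum (i := k) (fun n => sq_diagEntry_mul_le n (x n)) ?_
    (ellTwo_summable_sq _) (ellTwo_summable_sq x)
  rw [diagLin_apply, mul_pow]
  exact mul_lt_of_lt_one_left (by positivity)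
    (pow_lt_one₀ (diagEntry_nonneg k) (diagEntry_lt_one k) two_ne_zero)

/-- The diagonal operator on `ℓ₂` as a bounded operator. -/
noncomputable def diagOp : ellTwo →L[ℝ] ellTwo :=
  diagLin.mkContinuous 1 fun x => by simpa using norm_diagLin_le x

/-- The operator `(x, a) ↦ (D x, 0)` on `ℓ₂ ⊕_∞ ℝ`; the norm on `×` is the maximum norm. -/
noncomputable def diagProdOp : (ellTwo × ℝ) →L[ℝ] (ellTwo × ℝ) :=
  (ContinuousLinearMap.inl ℝ ellTwo ℝ).comp (diagOp.comp (ContinuousLinearMap.fst ℝ ellTwo ℝ))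

lemma norm_diagProdOp_apply (z : ellTwo × ℝ) : ‖diagProdOp z‖ = ‖diagLin z.1‖ := by
  have h : diagProdOp z = (diagLin z.1, 0) := rfl
  simp [h, Prod.norm_def]

/-- The vectors `(eₙ, 1)`. -/
noncomputable def maxSeq (n : ℕ) : ellTwo × ℝ := (lp.single 2 n (1 : ℝ), 1)

lemma norm_single_ellTwo (n : ℕ) (t : ℝ) : ‖(lp.single 2 n t : ellTwo)‖ = |t| := by
  simp

lemma norm_maxSeq (n : ℕ) : ‖maxSeq n‖ = 1 := by
  simp [maxSeq, Prod.norm_def]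

lemma norm_diagProdOp_maxSeq (n : ℕ) : ‖diagProdOp (maxSeq n)‖ = diagEntry n := by
  have h : diagLin (maxSeq n).1 = lp.single 2 n (diagEntry n) := by
    ext m
    rw [diagLin_apply]
    by_cases hm : m = n
    · subst hm; simp [maxSeq]
    · simp [maxSeq, hm]
  rw [norm_diagProdOp_apply, h, norm_single_ellTwo, abs_of_nonneg (diagEntry_nonneg n)]

lemma tendsto_diagEntry : Tendsto diagEntry atTop (𝓝 1) :=
  tendsto_natCast_div_add_atTop (1 : ℝ)

lemma norm_diagProdOp : ‖diagProdOp‖ = 1 := by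
  refine le_antisymm (ContinuousLinearMap.opNorm_le_bound _ zero_le_one fun z => ?_) ?_
  · rw [norm_diagProdOp_apply, one_mul]
    exact (norm_diagLin_le z.1).trans (norm_fst_le z)
  · refine le_of_tendsto' tendsto_diagEntry fun n => ?_
    simpa [norm_diagProdOp_maxSeq, norm_maxSeq] using diagProdOp.le_opNorm (maxSeq n)

theorem statement9 :
    ∃ S : (ellTwo × ℝ) →L[ℝ] (ellTwo × ℝ),
      (∃ x : ℕ → ellTwo × ℝ, MaximizingSeq S x ∧ ¬ WeaklyNull x) ∧ ¬ AttainsNorm S := by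
  refine ⟨diagProdOp, ⟨maxSeq, ⟨norm_maxSeq, ?_⟩, fun h => ?_⟩, ?_⟩
  · simpa only [norm_diagProdOp_maxSeq, norm_diagProdOp] using tendsto_diagEntry
  · have h1 := h (ContinuousLinearMap.snd ℝ ellTwo ℝ)
    exact one_ne_zero (tendsto_nhds_unique tendsto_const_nhds h1)
  · rintro ⟨z, hz, hSz⟩
    rw [norm_diagProdOp_apply, norm_diagProdOp] at hSz
    have hz1 : z.1 ≠ 0 := by
      intro h0
      simp [h0] at hSz
    have h1 := norm_diagLin_lt hz1
    have h2 := norm_fst_le z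
    linarith
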